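/- Let p be a prime and let G be a finite p-group of maximal class with |G| = p^n ≥ p^3 and cd(G) = {1, p}. Then cod(G) = {p^i | 0 ≤ i ≤ n-1}. -/

import Mathlib

open CategoryTheory

/-- The degree of a complex representation: the dimension of the underlying vector space. -/
noncomputable def repDegree {G : Type} [Group G] (V : FDRep ℂ G) : ℕ :=
  Module.finrank ℂ V

/-- The kernel of a representation of `G`, as a subgroup of `G`. -/
noncomputable def repKer {G : Type} [Group G] (V : FDRep ℂ G) : Subgroup G :=
  MonoidHom.ker (Representation.asGroupHom V.ρ)

/-- The codegree of a character: `|G : ker χ| / χ(1)`. -/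
noncomputable def codegree {G : Type} [Group G] (V : FDRep ℂ G) : ℕ :=
  (repKer V).index / repDegree V

/-- `cod(G)`: the set of codegrees of the irreducible complex characters of `G`. -/
def codSet (G : Type) [Group G] : Set ℕ :=
  {m | ∃ V : FDRep ℂ G, Simple V ∧ codegree V = m}

/-- `cd(G)`: the set of degrees of the irreducible complex characters of `G`. -/
def cdSet (G : Type) [Group G] : Set ℕ :=
  {m | ∃ V : FDRep ℂ G, Simple V ∧ repDegree V = m}

/-- The nilpotency class of `G`: the least `n` with `upperCentralSeries G n = ⊤`. -/
noncomputable def nilClass (G : Type) [Group G] : ℕ :=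
  sInf {n | upperCentralSeries G n = ⊤}

open scoped Classical in
/-- The character of `G` induced from the linear character `lam` of the subgroup `H`. -/
noncomputable def indLinearChar {G : Type} [Group G] [Fintype G] (H : Subgroup G)
    (lam : H →* ℂˣ) : G → ℂ :=
  fun g => (∑ x : G, if h : x * g * x⁻¹ ∈ H then ((lam ⟨x * g * x⁻¹, h⟩ : ℂˣ) : ℂ) else 0) /
    (Nat.card H : ℂ)

/-- A finite group is normally monomial if every irreducible complex character is induced
from a linear character of a normal subgroup. -/
def NormallyMonomial (G : Type) [Group G] [Fintype G] : Prop :=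
  ∀ V : FDRep ℂ G, Simple V → ∃ (H : Subgroup G) (lam : H →* ℂˣ),
    H.Normal ∧ FDRep.character V = indLinearChar H lam

open scoped MonoidAlgebra

/-- Schur's lemma for simple representations. -/
lemma scalar_of_simple {G : Type} [Group G] (V : FDRep ℂ G) (hV : Simple V)
    (f : V →ₗ[ℂ] V) (hf : ∀ g : G, f ∘ₗ V.ρ g = V.ρ g ∘ₗ f) : ∃ c : ℂ, f = c • LinearMap.id := by
  have h1 : Module.finrank ℂ (V ⟶ V) = 1 := finrank_endomorphism_simple_eq_one ℂ V
  have e := (FDRep.forget₂HomLinearEquiv V V).symm ≪≫ₗ Rep.homLinearEquiv _ _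
  rw [e.finrank_eq] at h1
  let F : Representation.IntertwiningMap ((forget₂ (FDRep ℂ G) (Rep ℂ G)).obj V).ρ
    ((forget₂ (FDRep ℂ G) (Rep ℂ G)).obj V).ρ := ⟨f, hf⟩
  let I : Representation.IntertwiningMap ((forget₂ (FDRep ℂ G) (Rep ℂ G)).obj V).ρ
    ((forget₂ (FDRep ℂ G) (Rep ℂ G)).obj V).ρ := ⟨LinearMap.id, fun _ => rfl⟩
  by_cases hI : I = 0
  · refine ⟨0, ?_⟩
    have hI' : (LinearMap.id : V →ₗ[ℂ] V) = 0 := congrArg (fun T => T.toLinearMap) hI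
    calc f = f ∘ₗ LinearMap.id := rfl
      _ = _ := by rw [hI']; simp
  · obtain ⟨c, hc⟩ := (finrank_eq_one_iff_of_nonzero' I hI).mp h1 F
    exact ⟨c, (congrArg (fun T => T.toLinearMap) hc).symm⟩

/-- Converse of Schur's lemma. -/
lemma simple_of_scalar {G : Type} [Group G] [Finite G] {M : Type} [AddCommGroup M] [Module ℂ M]
    [Module.Finite ℂ M] [Nontrivial M] (ρ : Representation ℂ G M)
    (h : ∀ f : M →ₗ[ℂ] M, (∀ g, f ∘ₗ ρ g = ρ g ∘ₗ f) → ∃ c : ℂ, f = c • LinearMap.id) :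
    Simple (FDRep.of ρ) := by
  have : NeZero (Nat.card G : ℂ) := ⟨by exact_mod_cast Nat.card_pos.ne'⟩
  rw [FDRep.simple_iff_end_is_rank_one]
  have e := (FDRep.forget₂HomLinearEquiv (FDRep.of ρ) (FDRep.of ρ)).symm ≪≫ₗ
    Rep.homLinearEquiv _ _
  rw [e.finrank_eq]
  let I : Representation.IntertwiningMap ((forget₂ (FDRep ℂ G) (Rep ℂ G)).obj (FDRep.of ρ)).ρ
    ((forget₂ (FDRep ℂ G) (Rep ℂ G)).obj (FDRep.of ρ)).ρ := ⟨LinearMap.id, fun _ => rfl⟩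
  have hI : I ≠ 0 := by
    intro hI
    have hI' : (LinearMap.id : M →ₗ[ℂ] M) = 0 := congrArg (fun T => T.toLinearMap) hI
    obtain ⟨x, hx⟩ := exists_ne (0 : M)
    exact hx (LinearMap.congr_fun hI' x)
  rw [finrank_eq_one_iff_of_nonzero' I hI]
  intro F
  obtain ⟨c, hc⟩ := h F.toLinearMap F.isIntertwining'
  refine ⟨c, ?_⟩
  apply Representation.IntertwiningMap.ext
  exact hc.symm

lemma exists_irr_nontrivial (Q : Type) [Group Q] [Finite Q] (z : Q) (hz : z ≠ 1) :
    ∃ (M : Type) (_ : AddCommGroup M) (_ : Module ℂ M) (_ : Module.Finite ℂ M) (_ : Nontrivial M)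
      (ρ : Representation ℂ Q M),
      (∀ f : M →ₗ[ℂ] M, (∀ g, f ∘ₗ ρ g = ρ g ∘ₗ f) → ∃ c : ℂ, f = c • LinearMap.id) ∧
      ρ z ≠ 1 := by
  have : NeZero (Nat.card Q : ℂ) := ⟨by exact_mod_cast Nat.card_pos.ne'⟩
  have hj : Module.jacobson ℂ[Q] ℂ[Q] = ⊥ := IsSemisimpleModule.jacobson_eq_bot _ _
  have hne : (MonoidAlgebra.of ℂ Q z - 1 : ℂ[Q]) ≠ 0 := by
    rw [sub_ne_zero, ← map_one (MonoidAlgebra.of ℂ Q)]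
    exact fun h => hz (MonoidAlgebra.of_injective h)
  have : ∃ I : Submodule ℂ[Q] ℂ[Q], IsCoatom I ∧ (MonoidAlgebra.of ℂ Q z - 1 : ℂ[Q]) ∉ I := by
    by_contra! hcon
    apply hne
    rw [← Submodule.mem_bot ℂ[Q], ← hj, Module.jacobson, Submodule.mem_sInf]
    exact fun I hI => hcon I hI
  obtain ⟨I, hI, hzI⟩ := this
  have : IsSimpleModule ℂ[Q] (ℂ[Q] ⧸ I) := isSimpleModule_iff_isCoatom.mpr hI
  have : Module.Finite ℂ ℂ[Q] := inferInstance
  have : Module.Finite ℂ (ℂ[Q] ⧸ I) :=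
    Module.Finite.of_surjective (I.mkQ.restrictScalars ℂ) I.mkQ_surjective
  have : Nontrivial (ℂ[Q] ⧸ I) := IsSimpleModule.nontrivial ℂ[Q] _
  refine ⟨ℂ[Q] ⧸ I, inferInstance, inferInstance, inferInstance, inferInstance,
    Representation.ofModule' _, ?_, ?_⟩
  · intro f hf
    have hfs : ∀ (a : ℂ[Q]) (x : ℂ[Q] ⧸ I), f (a • x) = a • f x := by
      intro a x
      induction a using MonoidAlgebra.induction_on with
      | of g => exact LinearMap.congr_fun (hf g) x
      | add a b ha hb => rw [add_smul, map_add, ha, hb, add_smul]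
      | smul r a ha => rw [smul_assoc, map_smul, ha, smul_assoc]
    let F : Module.End ℂ[Q] (ℂ[Q] ⧸ I) := { toFun := f, map_add' := f.map_add, map_smul' := hfs }
    obtain ⟨c, hc⟩ := (IsSimpleModule.algebraMap_end_bijective_of_isAlgClosed
      (A := ℂ[Q]) (V := ℂ[Q] ⧸ I) ℂ).2 F
    refine ⟨c, LinearMap.ext fun x => ?_⟩
    exact (LinearMap.congr_fun hc x).symm
  · intro h
    apply hzI
    have := LinearMap.congr_fun h (I.mkQ 1)
    have h2 : I.mkQ ((MonoidAlgebra.of ℂ Q z) • (1 : ℂ[Q])) = I.mkQ 1 := by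
      rw [map_smul]; 
      simpa [Representation.ofModule'] using this
    rw [← I.ker_mkQ, LinearMap.mem_ker, map_sub, ← h2]
    simp

/-- A nontrivial normal subgroup of a finite `p`-group meets the center nontrivially. -/
lemma exists_central_mem {p : ℕ} [Fact p.Prime] {Q : Type} [Group Q] [Finite Q]
    (hQ : IsPGroup p Q) (K : Subgroup Q) [K.Normal] (hK : K ≠ ⊥) :
    ∃ b ∈ K, b ∈ Subgroup.center Q ∧ b ≠ 1 := by
  have hd : p ∣ Nat.card K := by
    obtain ⟨k, hk⟩ := IsPGroup.iff_card.mp (hQ.to_subgroup K)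
    rw [hk]
    apply dvd_pow_self
    rintro rfl
    exact hK (K.card_eq_one.mp (by simpa using hk))
  obtain ⟨b, hb, hb1⟩ := (hQ.of_equiv ConjAct.toConjAct).exists_fixed_point_of_prime_dvd_card_of_fixed_point
    K hd (a := 1) (fun g => smul_one g)
  refine ⟨b, b.2, ?_, fun h => hb1 (Subtype.ext h.symm)⟩
  rw [Subgroup.mem_center_iff]
  intro g
  have := congrArg Subtype.val (hb (ConjAct.toConjAct g))
  simp only [ConjAct.Subgroup.val_conj_smul, ConjAct.smul_def, ConjAct.ofConjAct_toConjAct] at this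
  exact mul_inv_eq_iff_eq_mul.mp this

lemma mem_repKer {G : Type} [Group G] (V : FDRep ℂ G) (g : G) : g ∈ repKer V ↔ V.ρ g = 1 := by
  rw [repKer, MonoidHom.mem_ker, Units.ext_iff, Representation.asGroupHom_apply]
  rfl

/-- A faithful irreducible of a `p`-group quotient with center of order `p`. -/
lemma exists_simple_with_ker {p : ℕ} [Fact p.Prime] {G : Type} [Group G] [Finite G]
    (hG : IsPGroup p G) (N : Subgroup G) [N.Normal]
    (hZ : Nat.card (Subgroup.center (G ⧸ N)) = p) :
    ∃ V : FDRep ℂ G, Simple V ∧ repKer V = N := by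
  have hp := (Fact.out : p.Prime)
  have : Nontrivial (Subgroup.center (G ⧸ N)) :=
    Finite.one_lt_card_iff_nontrivial.mp (hZ ▸ hp.one_lt)
  obtain ⟨z, hz⟩ := exists_ne (1 : Subgroup.center (G ⧸ N))
  obtain ⟨M, _, _, _, _, ρ, hρ, hρz⟩ := exists_irr_nontrivial (G ⧸ N) z
    (fun h => hz (Subtype.ext h))
  have hinj : ρ.ker = ⊥ := by
    by_contra hK
    obtain ⟨b, hbK, hbZ, hb1⟩ := exists_central_mem (hG.to_quotient N) ρ.ker hK
    have hzb : (z : Subgroup.center (G ⧸ N)) ∈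
        Subgroup.zpowers (⟨b, hbZ⟩ : Subgroup.center (G ⧸ N)) :=
      mem_zpowers_of_prime_card hZ (fun h => hb1 (congrArg Subtype.val h))
    obtain ⟨k, hk⟩ := hzb
    apply hρz
    have : (z : G ⧸ N) = b ^ k := by rw [← hk]; rfl
    rw [this]
    exact ρ.ker.zpow_mem hbK k
  refine ⟨FDRep.of (ρ.comp (QuotientGroup.mk' N)), simple_of_scalar _ ?_, ?_⟩
  · intro f hf
    apply hρ
    intro q
    obtain ⟨g, rfl⟩ := QuotientGroup.mk'_surjective N q
    exact hf g
  · ext g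
    rw [mem_repKer, FDRep.of_ρ', MonoidHom.comp_apply, ← MonoidHom.mem_ker, hinj, Subgroup.mem_bot]
    exact QuotientGroup.eq_one_iff g

/-- In degree one, the image is commutative. -/
lemma comm_of_degree_one {G : Type} [Group G] (V : FDRep ℂ G) (h : repDegree V = 1) (a b : G) :
    a * b * a⁻¹ * b⁻¹ ∈ repKer V := by
  have key : ∀ f g : V →ₗ[ℂ] V, f * g = g * f := by
    intro f g
    have hs : ∀ f : V →ₗ[ℂ] V, ∃ c : ℂ, f = c • (1 : V →ₗ[ℂ] V) := by
      intro f
      obtain ⟨v, hv, hv'⟩ := finrank_eq_one_iff'.mp h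
      obtain ⟨c, hc⟩ := hv' (f v)
      refine ⟨c, LinearMap.ext fun w => ?_⟩
      obtain ⟨d, rfl⟩ := hv' w
      simp [← hc]
    obtain ⟨c, rfl⟩ := hs f
    obtain ⟨d, rfl⟩ := hs g
    simp [smul_smul, mul_comm]
  rw [mem_repKer, map_mul, map_mul, map_mul, key (V.ρ a), mul_assoc (V.ρ b), ← map_mul V.ρ a,
    mul_inv_cancel, map_one, mul_one, ← map_mul, mul_inv_cancel, map_one]

/-- A simple representation with abelian image has degree at most one. -/
lemma degree_le_one {G : Type} [Group G] (V : FDRep ℂ G) (hV : Simple V)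
    (hk : ∀ a b : G, a * b * a⁻¹ * b⁻¹ ∈ repKer V) : repDegree V ≤ 1 := by
  have hρ : ∀ a b, V.ρ a ∘ₗ V.ρ b = V.ρ b ∘ₗ V.ρ a := by
    intro a b
    have h := (mem_repKer V _).mp (hk a b)
    have h2 : V.ρ (a * b) = V.ρ (b * a) := by
      rw [show a * b = (a * b * a⁻¹ * b⁻¹) * (b * a) by group, map_mul, h, one_mul]
    rw [map_mul, map_mul] at h2
    exact h2
  by_cases hs : ∀ v : V, v = 0
  · exact finrank_le_one (0 : V) fun w => ⟨0, by simp [hs w]⟩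
  push Not at hs
  obtain ⟨v, hv⟩ := hs
  refine finrank_le_one v fun w => ?_
  obtain ⟨φ, hφ⟩ := Module.Projective.exists_dual_eq_one ℂ hv
  obtain ⟨c, hc⟩ := scalar_of_simple V hV (φ.smulRight w) (by
    intro g
    obtain ⟨d, hd⟩ := scalar_of_simple V hV (V.ρ g) (fun h => hρ g h)
    rw [hd]
    ext x
    simp [mul_smul])
  refine ⟨c, ?_⟩
  have := LinearMap.congr_fun hc v
  simpa [hφ] using this.symm

lemma one_mem_codSet (G : Type) [Group G] [Finite G] : 1 ∈ codSet G := by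
  refine ⟨FDRep.of (Representation.trivial ℂ G ℂ), simple_of_scalar _ ?_, ?_⟩
  · intro f _
    exact ⟨f 1, LinearMap.ext_ring (by simp)⟩
  · have h1 : repKer (FDRep.of (Representation.trivial ℂ G ℂ)) = ⊤ := by
      ext g
      rw [mem_repKer]
      simp only [Subgroup.mem_top, iff_true]
      rfl
    have h2 : repDegree (FDRep.of (Representation.trivial ℂ G ℂ)) = 1 := Module.finrank_self ℂ
    rw [codegree, h1, h2, Subgroup.index_top]

lemma index_ucs (G : Type) [Group G] [Finite G] (k : ℕ) :
    (Subgroup.upperCentralSeries G k).index =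
      Nat.card (Subgroup.center (G ⧸ Subgroup.upperCentralSeries G k)) *
        (Subgroup.upperCentralSeries G (k + 1)).index ∧
    (Subgroup.upperCentralSeries G (k + 1)).index =
      (Subgroup.center (G ⧸ Subgroup.upperCentralSeries G k)).index := by
  have h : (Subgroup.upperCentralSeries G (k + 1)).index =
      (Subgroup.center (G ⧸ Subgroup.upperCentralSeries G k)).index := by
    have : Subgroup.upperCentralSeries G (k + 1) = Subgroup.comap (QuotientGroup.mk' _)
      (Subgroup.center (G ⧸ Subgroup.upperCentralSeries G k)) :=
      Subgroup.upperCentralSeriesStep_eq_comap_center (Subgroup.upperCentralSeries G k)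
    rw [this, Subgroup.index_comap_of_surjective _ (QuotientGroup.mk'_surjective _)]
  refine ⟨?_, h⟩
  rw [h, Subgroup.card_mul_index]
  rfl

lemma center_eq_top_of_index_prime {p : ℕ} [Fact p.Prime] {Q : Type} [Group Q]
    (h : (Subgroup.center Q).index = p) : False := by
  have hc : Nat.card (Q ⧸ Subgroup.center Q) = p := h
  have : IsCyclic (Q ⧸ Subgroup.center Q) := isCyclic_of_prime_card hc
  have h2 := isMulCommutative_of_isCyclic_quotient_center_self Q
  have : Subgroup.center Q = ⊤ := by
    rw [eq_top_iff]
    intro x _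
    rw [Subgroup.mem_center_iff]
    exact fun g => h2.is_comm.comm g x
  rw [this, Subgroup.index_top] at h
  exact (Fact.out : p.Prime).one_lt.ne h

lemma ucs_structure (p n : ℕ) [Fact p.Prime] (G : Type) [Group G] [Finite G]
    (hcard : Nat.card G = p ^ n) (hn : 3 ≤ n)
    (hlt : ∀ k < n - 1, Subgroup.upperCentralSeries G k ≠ ⊤) :
    ∀ k ≤ n - 2, (Subgroup.upperCentralSeries G k).index = p ^ (n - k) := by
  have hp : p.Prime := Fact.out
  have hG : IsPGroup p G := IsPGroup.of_card hcard
  choose d hd using fun k => hG.index (Subgroup.upperCentralSeries G k)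
  have hd0 : d 0 = n := by
    apply Nat.pow_right_injective hp.two_le
    change p ^ d 0 = p ^ n
    rw [← hd, ← hcard, Subgroup.upperCentralSeries_zero, Subgroup.index_bot]
  have hpos : ∀ k < n - 1, 0 < d k := by
    intro k hk
    rw [Nat.pos_iff_ne_zero]
    intro h0
    apply hlt k hk
    rw [← Subgroup.index_eq_one, hd, h0, pow_zero]
  have hdec : ∀ k < n - 1, d (k + 1) < d k := by
    intro k hk
    have h1 := (index_ucs G k).1
    have : Nontrivial (G ⧸ Subgroup.upperCentralSeries G k) := by
      rw [← Finite.one_lt_card_iff_nontrivial]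
      change 1 < (Subgroup.upperCentralSeries G k).index
      rw [hd]
      exact Nat.one_lt_pow (hpos k hk).ne' hp.one_lt
    have h2 := (hG.to_quotient (Subgroup.upperCentralSeries G k)).center_nontrivial
    rw [← Finite.one_lt_card_iff_nontrivial] at h2
    rw [hd, hd] at h1
    apply (Nat.pow_lt_pow_iff_right hp.one_lt).mp
    rw [h1]
    exact lt_mul_of_one_lt_left (pow_pos hp.pos _) h2
  have h2 : 2 ≤ d (n - 2) := by
    have h0 := hpos (n - 2) (by omega)
    by_contra hcon
    have h1 : d (n - 2) = 1 := by omega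
    have h3 := (index_ucs G (n - 3)).2
    rw [show n - 3 + 1 = n - 2 by omega, hd, h1, pow_one] at h3
    exact center_eq_top_of_index_prime h3.symm
  have hup : ∀ k ≤ n - 2, d k + k ≤ n := by
    intro k
    induction k with
    | zero => intro _; omega
    | succ k ih =>
      intro hk
      have := ih (by omega)
      have := hdec k (by omega)
      omega
  have hlow : ∀ j ≤ n - 2, j + 2 ≤ d (n - 2 - j) := by
    intro j
    induction j with
    | zero => intro _; simpa using h2
    | succ j ih =>
      intro hj
      have h3 := ih (by omega)
      have h4 := hdec (n - 2 - (j + 1)) (by omega)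
      rw [show n - 2 - (j + 1) + 1 = n - 2 - j by omega] at h4
      omega
  intro k hk
  have h3 := hup k hk
  have h4 := hlow (n - 2 - k) (by omega)
  rw [show n - 2 - (n - 2 - k) = k by omega] at h4
  rw [hd, show d k = n - k by omega]

/-- A maximal class `p`-group of order `p^n ≥ p^3` with `cd(G) = {1, p}` has
`cod(G) = {p^i | 0 ≤ i ≤ n-1}`. -/
theorem maximal_class_two_degrees_full_codegrees (p n : ℕ) (hp : p.Prime) (G : Type) [Group G]
    [Fintype G] (hcard : Fintype.card G = p ^ n) (hn : 3 ≤ n) (hmax : nilClass G = n - 1)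
    (hcd : cdSet G = {1, p}) :
    codSet G = {m | ∃ i ≤ n - 1, m = p ^ i} := by
  have hfact : Fact p.Prime := ⟨hp⟩
  have hcard' : Nat.card G = p ^ n := by rw [Nat.card_eq_fintype_card, hcard]
  have hG : IsPGroup p G := IsPGroup.of_card hcard'
  have hlt : ∀ k < n - 1, Subgroup.upperCentralSeries G k ≠ ⊤ := by
    intro k hk h
    have h1 : nilClass G ≤ k := Nat.sInf_le h
    omega
  have hstr := ucs_structure p n G hcard' hn hlt
  have hdeg : ∀ V : FDRep ℂ G, Simple V → repDegree V = 1 ∨ repDegree V = p := by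
    intro V hV
    have : repDegree V ∈ cdSet G := ⟨V, hV, rfl⟩
    rw [hcd] at this
    simpa using this
  ext m
  constructor
  · rintro ⟨V, hV, rfl⟩
    obtain ⟨j, hj⟩ := hG.index (repKer V)
    have hjn : j ≤ n := by
      have := (repKer V).index_dvd_card
      rw [hj, hcard'] at this
      exact (Nat.pow_dvd_pow_iff_le_right hp.one_lt).mp this
    rcases hdeg V hV with h1 | h1
    · refine ⟨j, ?_, by rw [codegree, h1, hj, Nat.div_one]⟩
      by_contra hcon
      have hjn' : j = n := by omega
      have hbot : repKer V = ⊥ := by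
        rw [← Subgroup.card_eq_one]
        have := (repKer V).card_mul_index
        rw [hj, hcard', hjn'] at this
        exact Nat.eq_of_mul_eq_mul_right (pow_pos hp.pos n) (by rw [this, one_mul])
      apply hlt 1 (by omega)
      rw [eq_top_iff]
      intro x _
      rw [Subgroup.mem_upperCentralSeries_succ_iff]
      intro y
      have := comm_of_degree_one V h1 x y
      rw [hbot] at this
      exact this
    · have hj0 : j ≠ 0 := by
        rintro rfl
        rw [pow_zero, Subgroup.index_eq_one] at hj
        have := degree_le_one V hV (fun a b => hj ▸ Subgroup.mem_top _)
        have := hp.one_lt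
        omega
      refine ⟨j - 1, by omega, ?_⟩
      rw [codegree, h1, hj]
      obtain ⟨k, rfl⟩ := Nat.exists_eq_succ_of_ne_zero hj0
      rw [pow_succ, Nat.mul_div_cancel _ hp.pos]
      rfl
  · rintro ⟨i, hi, rfl⟩
    rcases Nat.lt_or_ge i 2 with h2 | h2
    · interval_cases i
      · exact one_mem_codSet G
      · obtain ⟨N, hN⟩ := Sylow.exists_subgroup_card_pow_prime p
          (G := G) (n := n - 1) (hcard' ▸ pow_dvd_pow p (Nat.sub_le n 1))
        have hNi : N.index = p := by
          have := N.card_mul_index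
          rw [hN, hcard', show n = n - 1 + 1 by omega, pow_succ] at this
          exact Nat.eq_of_mul_eq_mul_left (pow_pos hp.pos (n - 1)) (by simpa using this)
        have hNn : N.Normal := by
          apply Subgroup.normal_of_index_eq_minFac_card
          rw [hNi, hcard', hp.pow_minFac (by omega)]
        have hcyc : IsCyclic (G ⧸ N) := isCyclic_of_prime_card (p := p) hNi
        have hcomm : ∀ a b : G ⧸ N, a * b = b * a := hcyc.isMulCommutative.is_comm.comm
        have hZ : Subgroup.center (G ⧸ N) = ⊤ := by
          rw [eq_top_iff]
          intro x _
          rw [Subgroup.mem_center_iff]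
          exact fun g => hcomm g x
        obtain ⟨V, hV, hk⟩ := exists_simple_with_ker hG N (by
          rw [hZ, Subgroup.card_top]; exact hNi)
        have h1 : repDegree V = 1 := by
          have hle := degree_le_one V hV (fun a b => by
            rw [hk, ← QuotientGroup.eq_one_iff]
            simp only [QuotientGroup.mk_mul, QuotientGroup.mk_inv]
            rw [hcomm a b]
            group)
          have := hp.one_lt
          rcases hdeg V hV with h | h <;> omega
        exact ⟨V, hV, by rw [codegree, hk, hNi, h1, Nat.div_one, pow_one]⟩
    · have hj := hstr (n - 1 - i) (by omega)
      have hj1 := hstr (n - 1 - i + 1) (by omega)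
      have hc := (index_ucs G (n - 1 - i)).1
      rw [hj, hj1, show n - (n - 1 - i) = i + 1 by omega,
        show n - (n - 1 - i + 1) = i by omega, pow_succ, mul_comm] at hc
      obtain ⟨V, hV, hk⟩ := exists_simple_with_ker hG (Subgroup.upperCentralSeries G (n - 1 - i))
        (Nat.eq_of_mul_eq_mul_right (pow_pos hp.pos i) hc).symm
      refine ⟨V, hV, ?_⟩
      rcases hdeg V hV with h1 | h1
      · exfalso
        apply hlt (n - 1 - i + 1) (by omega)
        rw [eq_top_iff]
        intro x _
        rw [Subgroup.mem_upperCentralSeries_succ_iff]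
        intro y
        have := comm_of_degree_one V h1 x y
        rw [hk] at this
        exact this
      · rw [codegree, hk, hj, h1, show n - (n - 1 - i) = i + 1 by omega, pow_succ,
          Nat.mul_div_cancel _ hp.pos]
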